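/- arXiv:1905.00212 — 2 statements merged into one kernel-verified Lean document; each statement's English description precedes it below -/
import Mathlib

section
/- The automorphism group of the graph Π_I has cardinality exactly 60. -/
/-- The ten faces of the hemi-icosahedron on vertex set `Fin 6`. -/
def faces : Finset (Finset (Fin 6)) :=
  {{0,1,2}, {0,2,3}, {0,3,4}, {0,4,5}, {0,5,1}, {1,2,4}, {2,3,5}, {1,3,4}, {2,4,5}, {1,3,5}}

/-- The 16-element vertex set: `Fin 6` together with the ten faces. -/
abbrev V16 := Fin 6 ⊕ {f : Finset (Fin 6) // f ∈ faces}

/-- Vertex-face incidence: `v : Fin 6` is incident to a face `f` iff `v ∈ f`. -/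
def piRel : V16 → V16 → Prop := fun a b =>
  match a, b with
  | Sum.inl v, Sum.inr f => v ∈ f.1
  | _, _ => False

instance : DecidableRel piRel := fun a b =>
  match a, b with
  | Sum.inl v, Sum.inr f => inferInstanceAs (Decidable (v ∈ f.1))
  | Sum.inl _, Sum.inl _ => Decidable.isFalse id
  | Sum.inr _, Sum.inl _ => Decidable.isFalse id
  | Sum.inr _, Sum.inr _ => Decidable.isFalse id

/-- `Π_I`, the projective vertex-face graph of the icosahedron (vertex-face graph of
the hemi-icosahedron): `v : Fin 6` is adjacent to `f ∈ faces` iff `v ∈ f`. -/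
def piI : SimpleGraph V16 := SimpleGraph.fromRel piRel

instance : DecidableRel piI.Adj := fun a b =>
  decidable_of_iff _ (SimpleGraph.fromRel_adj piRel a b).symm

def goodPerm (s : Equiv.Perm (Fin 6)) : Prop :=
  ∀ f ∈ faces, f.map s.toEmbedding ∈ faces

instance : DecidablePred goodPerm := fun s =>
  inferInstanceAs (Decidable (∀ f ∈ faces, f.map s.toEmbedding ∈ faces))

theorem goodPerm_card : Fintype.card {s : Equiv.Perm (Fin 6) // goodPerm s} = 60 := by
  decide +kernel

theorem goodPerm_iff {s : Equiv.Perm (Fin 6)} (h : goodPerm s) (f : Finset (Fin 6)) :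
    f ∈ faces ↔ s.finsetCongr f ∈ faces := by
  have e : faces.map s.finsetCongr.toEmbedding = faces := by
    apply Finset.eq_of_subset_of_card_le
    · intro x hx
      obtain ⟨y, hy, rfl⟩ := Finset.mem_map.1 hx
      exact h y hy
    · simp
  constructor
  · exact h f
  · intro hf
    rw [← e] at hf
    obtain ⟨y, hy, hy2⟩ := Finset.mem_map.1 hf
    rw [← s.finsetCongr.injective hy2]
    exact hy

theorem adj_ll (v w : Fin 6) : ¬ piI.Adj (Sum.inl v) (Sum.inl w) := by
  simp [piI, piRel]

theorem adj_rr (v w : {f : Finset (Fin 6) // f ∈ faces}) :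
    ¬ piI.Adj (Sum.inr v) (Sum.inr w) := by
  simp [piI, piRel]

theorem adj_lr (v : Fin 6) (f : {f : Finset (Fin 6) // f ∈ faces}) :
    piI.Adj (Sum.inl v) (Sum.inr f) ↔ v ∈ f.1 := by
  simp [piI, piRel]

theorem adj_rl (v : Fin 6) (f : {f : Finset (Fin 6) // f ∈ faces}) :
    piI.Adj (Sum.inr f) (Sum.inl v) ↔ v ∈ f.1 := by
  simp [piI, piRel]

theorem deg_l : ∀ v : Fin 6, piI.degree (Sum.inl v) = 5 := by
  decide +kernel

theorem deg_r : ∀ f : {f : Finset (Fin 6) // f ∈ faces}, piI.degree (Sum.inr f) = 3 := by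
  decide +kernel

def toIso (s : {s : Equiv.Perm (Fin 6) // goodPerm s}) : piI ≃g piI where
  toEquiv := Equiv.sumCongr s.1 (s.1.finsetCongr.subtypeEquiv (goodPerm_iff s.2))
  map_rel_iff' := by
    rintro (a | a) (b | b)
    · simp [adj_ll]
    · simp [adj_lr]
    · simp [adj_rl]
    · simp [adj_rr]

theorem toIso_bij : Function.Bijective toIso := by
  constructor
  · intro s t h
    apply Subtype.ext
    ext1 v
    have := congrArg (fun g : piI ≃g piI => g (Sum.inl v)) h
    exact Sum.inl_injective this
  · intro g
    have h1 : ∀ v : Fin 6, ∃ w : Fin 6, g (Sum.inl v) = Sum.inl w := by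
      intro v
      have hd := g.degree_eq (Sum.inl v)
      rcases hg : g (Sum.inl v) with w | f
      · exact ⟨w, rfl⟩
      · rw [hg, deg_l, deg_r] at hd
        omega
    have h2 : ∀ f : {f : Finset (Fin 6) // f ∈ faces},
        ∃ f' : {f : Finset (Fin 6) // f ∈ faces}, g (Sum.inr f) = Sum.inr f' := by
      intro v
      have hd := g.degree_eq (Sum.inr v)
      rcases hg : g (Sum.inr v) with w | f
      · rw [hg, deg_l, deg_r] at hd
        omega
      · exact ⟨f, rfl⟩
    choose s hs using h1
    choose t ht using h2
    have si : Function.Injective s := by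
      intro a b hab
      have : g (Sum.inl a) = g (Sum.inl b) := by rw [hs, hs, hab]
      exact Sum.inl_injective (g.injective this)
    let S : Equiv.Perm (Fin 6) := Equiv.ofBijective s (Finite.injective_iff_bijective.1 si)
    have key : ∀ f : {f : Finset (Fin 6) // f ∈ faces}, f.1.map S.toEmbedding = (t f).1 := by
      intro f
      ext w
      obtain ⟨v, rfl⟩ := S.surjective w
      have := g.map_adj_iff (v := Sum.inl v) (w := Sum.inr f)
      rw [hs, ht, adj_lr, adj_lr] at this
      rw [Finset.mem_map_equiv, Equiv.symm_apply_apply]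
      exact this.symm
    refine ⟨⟨S, fun f hf => ?_⟩, ?_⟩
    · rw [key ⟨f, hf⟩]
      exact (t ⟨f, hf⟩).2
    · apply RelIso.ext
      rintro (v | f)
      · rw [hs]
        rfl
      · rw [ht]
        exact congrArg Sum.inr (Subtype.ext (key f))

/-- The automorphism group of `Π_I` has exactly 60 elements. -/
theorem stmt_7 : Nat.card (piI ≃g piI) = 60 := by
  rw [← Nat.card_congr (Equiv.ofBijective toIso toIso_bij), Nat.card_eq_fintype_card,
    goodPerm_card]
end

section
/- The automorphism group of the graph Π_I acts transitively on its edges: for any two edges {u₁,f₁} and {u₂,f₂} of Π_I there is an automorphism of Π_I carrying the first edge to the second. -/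
def mapFaces (σ : Equiv.Perm (Fin 6)) (h : ∀ f : Finset (Fin 6), f ∈ faces ↔ f.map σ.toEmbedding ∈ faces) :
    piI ≃g piI where
  toEquiv := Equiv.sumCongr σ ((Equiv.finsetCongr σ).subtypeEquiv h)
  map_rel_iff' := by
    rintro (a | a) (b | b) <;>
      simp [piI, SimpleGraph.fromRel_adj, piRel, Equiv.subtypeEquiv]

def rot : Equiv.Perm (Fin 6) :=
  ⟨![0, 2, 3, 4, 5, 1], ![0, 5, 1, 2, 3, 4], by decide, by decide⟩

def inv : Equiv.Perm (Fin 6) :=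
  ⟨![1, 0, 2, 4, 3, 5], ![1, 0, 2, 4, 3, 5], by decide, by decide⟩

theorem faces_iff (σ : Equiv.Perm (Fin 6)) (h : ∀ f ∈ faces, f.map σ.toEmbedding ∈ faces)
    (h' : ∀ f ∈ faces, f.map σ.symm.toEmbedding ∈ faces) (f : Finset (Fin 6)) :
    f ∈ faces ↔ f.map σ.toEmbedding ∈ faces := by
  refine ⟨h f, fun hf => ?_⟩
  have := h' _ hf
  have e : (f.map σ.toEmbedding).map σ.symm.toEmbedding = f := by
    ext x; simp
  rwa [e] at this

def R : piI ≃g piI := mapFaces rot (faces_iff rot (by decide) (by decide))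
def S : piI ≃g piI := mapFaces inv (faces_iff inv (by decide) (by decide))

/-- the base edge -/
def base : Sym2 V16 := s(Sum.inl 0, Sum.inr ⟨{0, 1, 2}, by decide⟩)

def W (b : Bool) (i k : Fin 5) (x : V16) : V16 :=
  R^[i.1] (if b then S (R^[k.1] x) else R^[k.1] x)

def iter (g : piI ≃g piI) : ℕ → (piI ≃g piI)
  | 0 => RelIso.refl _
  | n + 1 => g.trans (iter g n)

theorem iter_apply (g : piI ≃g piI) (n : ℕ) (x : V16) : iter g n x = g^[n] x := by
  induction n generalizing x with
  | zero => rfl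
  | succ n ih => simp [iter, ih]

def code : V16 → Finset (Fin 6) := Sum.elim (fun v => {v}) (fun f => f.1)

theorem faces_card : ∀ f ∈ faces, f.card = 3 := by decide

theorem code_inj : Function.Injective code := by
  rintro (a | ⟨a, ha⟩) (b | ⟨b, hb⟩) h
  · simpa [code] using h
  · have h' : ({a} : Finset (Fin 6)) = b := h
    have := faces_card b hb
    simp [← h'] at this
  · have h' : a = ({b} : Finset (Fin 6)) := h
    have := faces_card a ha
    simp [h'] at this
  · have h' : a = b := h
    subst h'; rfl

set_option maxRecDepth 100000 in
theorem key : ∀ (v : Fin 6) (f : {f : Finset (Fin 6) // f ∈ faces}), v ∈ f.1 →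
    ∃ b : Bool, ∃ i k : Fin 5, code (W b i k (Sum.inl 0)) = {v} ∧
      code (W b i k (Sum.inr ⟨{0, 1, 2}, by decide⟩)) = f.1 := by
  decide +kernel

theorem from_base (e : Sym2 V16) (he : e ∈ piI.edgeSet) :
    ∃ φ : piI ≃g piI, Sym2.map (⇑φ) base = e := by
  have main : ∀ (v : Fin 6) (f : {f : Finset (Fin 6) // f ∈ faces}), v ∈ f.1 →
      ∃ φ : piI ≃g piI, Sym2.map (⇑φ) base = s(Sum.inl v, Sum.inr f) := by
    intro v f h
    obtain ⟨b, i, k, h1, h2⟩ := key v f h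
    replace h1 := @code_inj _ (Sum.inl v) h1
    replace h2 := @code_inj _ (Sum.inr f) h2
    refine ⟨((iter R k).trans (if b then S else RelIso.refl _)).trans (iter R i), ?_⟩
    rw [base, Sym2.map_mk, ← h1, ← h2]
    cases b <;> simp [W, iter_apply]
  induction e with
  | h a b =>
    rw [SimpleGraph.mem_edgeSet] at he
    rcases a with a | a <;> rcases b with b | b <;>
      simp [piI, SimpleGraph.fromRel_adj, piRel] at he
    · exact main a b he
    · rw [Sym2.eq_swap]; exact main b a he

/-- The automorphism group of `Π_I` acts transitively on the edges of `Π_I`. -/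
theorem stmt_10 :
    ∀ e₁ ∈ piI.edgeSet, ∀ e₂ ∈ piI.edgeSet,
      ∃ φ : piI ≃g piI, Sym2.map (⇑φ) e₁ = e₂ := by
  intro e₁ h₁ e₂ h₂
  obtain ⟨φ, rfl⟩ := from_base e₁ h₁
  obtain ⟨ψ, rfl⟩ := from_base e₂ h₂
  refine ⟨φ.symm.trans ψ, ?_⟩
  rw [Sym2.map_map]
  congr 1
  funext x
  simp
end
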